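/- arXiv:1806.05972 — 4 statements merged into one kernel-verified Lean document; each statement's English description precedes it below -/
import Mathlib

section
/- Let x be a modular element of a lattice L and let y, z ∈ L satisfy x ⊔ y = x ⊔ z and x ⊓ y = x ⊓ z. Then there exists an element x' ∈ L such that x' ≤ x, x' ⊔ y = x' ⊔ z, x' ⊓ y = x' ⊓ z, and y ⊔ z = x' ⊔ y. (A witness is x' = x ⊓ (y ⊔ z).) -/
/-- If `x` is a modular element of a lattice and `x ⊔ y = x ⊔ z`, `x ⊓ y = x ⊓ z`,
then there is `x' ≤ x` with `x' ⊔ y = x' ⊔ z`, `x' ⊓ y = x' ⊓ z` and `y ⊔ z = x' ⊔ y`. -/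
theorem modular_descend {L : Type*} [Lattice L] (x : L)
    (hm : ∀ y z : L, y ≤ z → (x ⊔ y) ⊓ z = (x ⊓ z) ⊔ y)
    (y z : L) (hj : x ⊔ y = x ⊔ z) (hmeet : x ⊓ y = x ⊓ z) :
    ∃ x' : L, x' ≤ x ∧ x' ⊔ y = x' ⊔ z ∧ x' ⊓ y = x' ⊓ z ∧ y ⊔ z = x' ⊔ y := by
  -- Both joins with `x' = x ⊓ (y ⊔ z)` equal `y ⊔ z`, by modularity and `y ⊔ z ≤ x ⊔ y = x ⊔ z`.
  have hle : y ⊔ z ≤ x ⊔ y := sup_le le_sup_right (hj ▸ le_sup_right)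
  have hy : x ⊓ (y ⊔ z) ⊔ y = y ⊔ z := by
    rw [← hm y (y ⊔ z) le_sup_left, inf_eq_right.2 hle]
  have hz : x ⊓ (y ⊔ z) ⊔ z = y ⊔ z := by
    rw [← hm z (y ⊔ z) le_sup_right, ← hj, inf_eq_right.2 hle]
  refine ⟨x ⊓ (y ⊔ z), inf_le_left, hy.trans hz.symm, ?_, hy.symm⟩
  rw [inf_assoc, inf_assoc, inf_eq_right.2 (le_sup_left : y ≤ y ⊔ z),
    inf_eq_right.2 (le_sup_right : z ≤ y ⊔ z), hmeet]
end

section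
/- For every natural number n, a subgroup G of the symmetric group S_n (realized as Equiv.Perm (Fin n)) is a cancellable element of the lattice of all subgroups of S_n if and only if G is the trivial subgroup or G = S_n. -/
/-!
The lattice laws settle `G = ⊥` and `G = ⊤`. Conversely, let `G` be cancellable and let `s` be a
transposition outside `G`. For `g ∈ G` the order-two subgroups generated by `s` and by `g s g⁻¹`
have the same join with `G` (they are conjugate under `G`) and both meet `G` trivially, so they
coincide and `g` commutes with `s` (`conj_swap_eq_of_cancellable`). Hence `G` preserves `{x, y}`
whenever `(x y) ∉ G`.

If `G ≠ ⊤`, some transposition `(a b)` is not in `G`, because transpositions generate. For any third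
point `c`, one of `(a c)`, `(b c)` is not in `G` either, as together they generate `(a b)`. So `G`
preserves `{a, b}` and one of `{a, c}`, `{b, c}`, which forces it to fix `a`, `b` and `c`. If there
is no third point, a nontrivial element of `G` would be `(a b)` itself. Either way `G = ⊥`.
-/

theorem eq_one_or_eq_of_mem_zpowers {A : Type*} [Group A] {s t : A} (hs : s * s = 1)
    (ht : t ∈ Subgroup.zpowers s) : t = 1 ∨ t = s := by
  obtain ⟨k, rfl⟩ := Subgroup.mem_zpowers_iff.1 ht
  rcases Int.even_or_odd' k with ⟨m, rfl | rfl⟩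
  · left
    rw [zpow_mul, zpow_two, hs, one_zpow]
  · right
    rw [zpow_add, zpow_mul, zpow_two, hs, one_zpow, one_mul, zpow_one]

theorem inf_zpowers_eq_bot {A : Type*} [Group A] {G : Subgroup A} {s : A} (hs : s * s = 1)
    (hG : s ∉ G) : G ⊓ Subgroup.zpowers s = ⊥ := by
  rw [eq_bot_iff]
  rintro t ⟨htG, ht⟩
  rcases eq_one_or_eq_of_mem_zpowers hs ht with rfl | rfl
  · exact Subgroup.one_mem _
  · exact absurd htG hG

theorem sup_zpowers_conj {A : Type*} [Group A] {G : Subgroup A} {s g : A} (hg : g ∈ G) :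
    G ⊔ Subgroup.zpowers s = G ⊔ Subgroup.zpowers (g * s * g⁻¹) := by
  have key : ∀ (u h : A), h ∈ G →
      G ⊔ Subgroup.zpowers (h * u * h⁻¹) ≤ G ⊔ Subgroup.zpowers u := by
    intro u h hh
    have hh' : h ∈ G ⊔ Subgroup.zpowers u := Subgroup.mem_sup_left hh
    refine sup_le le_sup_left ?_
    rw [Subgroup.zpowers_le]
    exact mul_mem (mul_mem hh' (Subgroup.mem_sup_right (Subgroup.mem_zpowers u))) (inv_mem hh')
  refine le_antisymm ?_ (key s g hg)
  have := key (g * s * g⁻¹) g⁻¹ (inv_mem hg)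
  simpa [mul_assoc] using this

/-- A cancellable subgroup centralizes every transposition it does not contain; equivalently, it
preserves the support of that transposition. -/
theorem conj_swap_eq_of_cancellable {α : Type*} [DecidableEq α] {G : Subgroup (Equiv.Perm α)}
    (h : ∀ Y Z : Subgroup (Equiv.Perm α), G ⊔ Y = G ⊔ Z → G ⊓ Y = G ⊓ Z → Y = Z)
    {x y : α} (hxy : x ≠ y) (hG : Equiv.swap x y ∉ G) {g : Equiv.Perm α} (hg : g ∈ G) :
    (g x = x ∧ g y = y) ∨ (g x = y ∧ g y = x) := by
  have hconj : g * Equiv.swap x y * g⁻¹ = Equiv.swap (g x) (g y) := by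
    rw [Equiv.mul_swap_eq_swap_mul, mul_assoc, mul_inv_cancel, mul_one]
  have hG' : Equiv.swap (g x) (g y) ∉ G := by
    intro hmem
    rw [← hconj] at hmem
    apply hG
    have := mul_mem (mul_mem (inv_mem hg) hmem) hg
    simpa [mul_assoc] using this
  have heq : Subgroup.zpowers (Equiv.swap x y) = Subgroup.zpowers (Equiv.swap (g x) (g y)) := by
    apply h
    · rw [← hconj]
      exact sup_zpowers_conj hg
    · rw [inf_zpowers_eq_bot (Equiv.swap_mul_self _ _) hG,
        inf_zpowers_eq_bot (Equiv.swap_mul_self _ _) hG']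
  have hmem : Equiv.swap (g x) (g y) ∈ Subgroup.zpowers (Equiv.swap x y) :=
    heq ▸ Subgroup.mem_zpowers _
  rcases eq_one_or_eq_of_mem_zpowers (Equiv.swap_mul_self _ _) hmem with h1 | h1
  · exact absurd (h1 ▸ one_mem G) hG'
  · have h2 := congrArg (fun p : Equiv.Perm α => p (g x)) h1
    simp only [Equiv.swap_apply_left, Equiv.swap_apply_def] at h2
    have hne : g x ≠ g y := fun e => hxy (g.injective e)
    split_ifs at h2 with h3 h4
    · exact Or.inl ⟨h3, h2⟩
    · exact Or.inr ⟨h4, h2⟩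
    · exact absurd h2.symm hne

/-- A subgroup `G` of `S_n` is a cancellable element of the subgroup lattice of `S_n`
iff `G` is trivial or `G = S_n`. -/
theorem cancellable_subgroup_of_symmetric_iff (n : ℕ) (G : Subgroup (Equiv.Perm (Fin n))) :
    (∀ Y Z : Subgroup (Equiv.Perm (Fin n)), G ⊔ Y = G ⊔ Z → G ⊓ Y = G ⊓ Z → Y = Z) ↔
      (G = ⊥ ∨ G = ⊤) := by
  constructor
  · intro h
    by_cases htop : G = ⊤
    · exact Or.inr htop
    left
    obtain ⟨a, b, hab, habG⟩ : ∃ a b : Fin n, a ≠ b ∧ Equiv.swap a b ∉ G := by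
      by_contra! hall
      apply htop
      rw [eq_top_iff, ← Equiv.Perm.closure_isSwap, Subgroup.closure_le]
      rintro _ ⟨x, y, hxy, rfl⟩
      exact hall x y hxy
    have hthird : ∀ c, c ≠ a → c ≠ b → Equiv.swap a c ∉ G ∨ Equiv.swap b c ∉ G := by
      intro c hca hcb
      by_contra! hc
      apply habG
      have := mul_mem (mul_mem hc.1 hc.2) hc.1
      rwa [Equiv.swap_comm a c,
        Equiv.swap_mul_swap_mul_swap hcb.symm hab.symm] at this
    rw [eq_bot_iff]
    intro g hg
    rw [Subgroup.mem_bot]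
    have hfix : ∀ c, c ≠ a → c ≠ b → g a = a ∧ g b = b ∧ g c = c := by
      intro c hca hcb
      have h0 := conj_swap_eq_of_cancellable h hab habG hg
      rcases hthird c hca hcb with hc | hc
      · have h1 := conj_swap_eq_of_cancellable h hca.symm hc hg
        grind
      · have h1 := conj_swap_eq_of_cancellable h hcb.symm hc hg
        grind
    by_cases hc : ∃ c, c ≠ a ∧ c ≠ b
    · obtain ⟨c, hca, hcb⟩ := hc
      obtain ⟨ha, hb, -⟩ := hfix c hca hcb
      ext1 x
      rw [Equiv.Perm.one_apply]
      by_cases hxa : x = a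
      · rw [hxa, ha]
      by_cases hxb : x = b
      · rw [hxb, hb]
      exact (hfix x hxa hxb).2.2
    · push Not at hc
      rcases conj_swap_eq_of_cancellable h hab habG hg with ⟨ha, hb⟩ | ⟨ha, hb⟩
      · ext1 x
        rw [Equiv.Perm.one_apply]
        by_cases hxa : x = a
        · rw [hxa, ha]
        · rw [hc x hxa, hb]
      · refine absurd ?_ habG
        have : g = Equiv.swap a b := by
          ext1 x
          by_cases hxa : x = a
          · rw [hxa, ha, Equiv.swap_apply_left]
          · rw [hc x hxa, hb, Equiv.swap_apply_right]
        exact this ▸ hg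
  · rintro (rfl | rfl) Y Z hsup hinf
    · simpa using hsup
    · simpa using hinf
end

section
/- Let G be a subgroup of the symmetric group S_4 (realized as Equiv.Perm (Fin 4)) containing the Klein four-group V_4. Then G = V_4, or G = A_4, or G = S_4, or there exist distinct a, b ∈ Fin 4 such that G = V_4 ⊔ closure {swap a b} (one of the three Sylow 2-subgroups of S_4, each of order 8). -/
/-!
`S_4` is the semidirect product of `V_4` and the stabilizer of the letter `3`, which consists of
`1`, the transpositions `(0 1)`, `(1 2)`, `(0 2)`, the 3-cycle `(0 1)(1 2)` and its inverse. Hence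
a subgroup containing `V_4` is determined by which of these six elements it contains
(`le_of_stabilizer_mem`). If it contains the 3-cycle, it is `A_4` or, once a transposition is
present as well, `S_4`. Otherwise it contains at most one of the three transpositions, since the
product of two of them is a 3-cycle; so it is `V_4` or `V_4 ⊔ ⟨(a b)⟩`.
-/

/-- The Klein four-group inside `S_4`. -/
def V4 : Subgroup (Equiv.Perm (Fin 4)) :=
  Subgroup.closure {Equiv.swap 0 1 * Equiv.swap 2 3, Equiv.swap 0 2 * Equiv.swap 1 3}

open Equiv in
/-- The factorization `S_4 = V_4 · Stab(3)`, with both factors listed. -/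
lemma exists_eq_V4_mul_stabilizer : ∀ g : Perm (Fin 4),
    ∃ v ∈ [1, swap 0 1 * swap 2 3, swap 0 2 * swap 1 3,
        (swap 0 1 * swap 2 3) * (swap 0 2 * swap 1 3)],
      ∃ s ∈ [1, swap 0 1, swap 1 2, swap 0 2, swap 0 1 * swap 1 2, (swap 0 1 * swap 1 2)⁻¹],
        g = v * s := by
  set_option maxRecDepth 100000 in decide

open Equiv in
/-- Inclusions between subgroups containing `V_4` can be tested on the stabilizer of `3`. -/
lemma le_of_stabilizer_mem {G H : Subgroup (Perm (Fin 4))} (hG : V4 ≤ G) (hH : V4 ≤ H)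
    (h01 : swap 0 1 ∈ G → swap 0 1 ∈ H) (h12 : swap 1 2 ∈ G → swap 1 2 ∈ H)
    (h02 : swap 0 2 ∈ G → swap 0 2 ∈ H)
    (hc : swap 0 1 * swap 1 2 ∈ G → swap 0 1 * swap 1 2 ∈ H) : G ≤ H := by
  intro g hg
  obtain ⟨v, hv, s, hs, rfl⟩ := exists_eq_V4_mul_stabilizer g
  have ha : swap 0 1 * swap 2 3 ∈ V4 := Subgroup.subset_closure (by simp)
  have hb : swap 0 2 * swap 1 3 ∈ V4 := Subgroup.subset_closure (by simp)
  have hvV : v ∈ V4 := by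
    simp only [List.mem_cons, List.not_mem_nil, or_false] at hv
    rcases hv with rfl | rfl | rfl | rfl
    exacts [one_mem _, ha, hb, mul_mem ha hb]
  have hsG : s ∈ G := (Subgroup.mul_mem_cancel_left G (hG hvV)).1 hg
  refine mul_mem (hH hvV) ?_
  simp only [List.mem_cons, List.not_mem_nil, or_false] at hs
  rcases hs with rfl | rfl | rfl | rfl | rfl | rfl
  exacts [one_mem _, h01 hsG, h12 hsG, h02 hsG, hc hsG,
    inv_mem (hc (inv_mem_iff.1 hsG))]

open Equiv in
lemma V4_le_alternatingGroup : V4 ≤ alternatingGroup (Fin 4) := by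
  rw [V4, Subgroup.closure_le]
  rintro x (rfl | rfl) <;> simp only [SetLike.mem_coe, Perm.mem_alternatingGroup] <;> decide

/-- Every subgroup of `S_4` containing `V_4` is `V_4`, `A_4`, `S_4`, or
`V_4 ⊔ ⟨(a b)⟩` for some distinct `a, b`. -/
theorem subgroups_of_S4_containing_V4 (G : Subgroup (Equiv.Perm (Fin 4))) (h : V4 ≤ G) :
    G = V4 ∨ G = alternatingGroup (Fin 4) ∨ G = ⊤ ∨
      ∃ a b : Fin 4, a ≠ b ∧ G = V4 ⊔ Subgroup.closure {Equiv.swap a b} := by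
  open Equiv in
  have odd (a b : Fin 4) (hab : a ≠ b) : swap a b ∉ alternatingGroup (Fin 4) := by
    simp [Perm.mem_alternatingGroup, Perm.sign_swap hab]
  have mem_sup (a b : Fin 4) : swap a b ∈ V4 ⊔ Subgroup.closure {swap a b} :=
    (le_sup_right : _ ≤ V4 ⊔ Subgroup.closure {swap a b}) (Subgroup.subset_closure rfl)
  have sup_le' (a b : Fin 4) (hab : swap a b ∈ G) :
      V4 ⊔ Subgroup.closure {swap a b} ≤ G :=
    sup_le h ((Subgroup.closure_le _).2 (by simpa using hab))
  -- In every order, the product of two of the three transpositions is `(0 1)(1 2)` or its inverse.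
  have c1 : swap 0 1 ∈ G → swap 1 2 ∈ G → swap 0 1 * swap (1 : Fin 4) 2 ∈ G := mul_mem
  have c2 (x : swap 0 1 ∈ G) (y : swap 0 2 ∈ G) : swap 0 1 * swap (1 : Fin 4) 2 ∈ G := by
    have e : swap 0 1 * swap (1 : Fin 4) 2 = swap 0 2 * swap 0 1 := by decide
    exact e ▸ mul_mem y x
  have c3 (x : swap 1 2 ∈ G) (y : swap 0 2 ∈ G) : swap 0 1 * swap (1 : Fin 4) 2 ∈ G := by
    have e : swap 0 1 * swap (1 : Fin 4) 2 = swap 1 2 * swap 0 2 := by decide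
    exact e ▸ mul_mem x y
  by_cases hc : swap 0 1 * swap (1 : Fin 4) 2 ∈ G
  · have i1 : swap 0 1 ∈ G ↔ swap 1 2 ∈ G :=
      ⟨fun x => (Subgroup.mul_mem_cancel_left G x).1 hc,
        fun x => (Subgroup.mul_mem_cancel_right G x).1 hc⟩
    have i2 : swap 0 1 ∈ G ↔ swap 0 2 ∈ G := by
      have e : swap 0 1 * swap (1 : Fin 4) 2 = swap 0 2 * swap 0 1 := by decide
      rw [e] at hc
      exact ⟨fun x => (Subgroup.mul_mem_cancel_right G x).1 hc,
        fun x => (Subgroup.mul_mem_cancel_left G x).1 hc⟩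
    by_cases ht : swap 0 1 ∈ G
    · refine .inr (.inr (.inl (top_le_iff.1 ?_)))
      exact le_of_stabilizer_mem le_top h (fun _ => ht) (fun _ => i1.1 ht) (fun _ => i2.1 ht)
        (fun _ => hc)
    · refine .inr (.inl (le_antisymm ?_ ?_))
      · refine le_of_stabilizer_mem h V4_le_alternatingGroup (fun x => absurd x ht)
          (fun x => absurd (i1.2 x) ht) (fun x => absurd (i2.2 x) ht) (fun _ => ?_)
        rw [Perm.mem_alternatingGroup]
        decide
      · exact le_of_stabilizer_mem V4_le_alternatingGroup h
          (fun x => absurd x (odd _ _ (by decide))) (fun x => absurd x (odd _ _ (by decide)))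
          (fun x => absurd x (odd _ _ (by decide))) (fun _ => hc)
  · by_cases h01 : swap 0 1 ∈ G
    · refine .inr (.inr (.inr ⟨0, 1, by decide, le_antisymm ?_ (sup_le' _ _ h01)⟩))
      exact le_of_stabilizer_mem h le_sup_left (fun _ => mem_sup _ _)
        (fun x => absurd (c1 h01 x) hc) (fun x => absurd (c2 h01 x) hc) (fun x => absurd x hc)
    by_cases h12 : swap 1 2 ∈ G
    · refine .inr (.inr (.inr ⟨1, 2, by decide, le_antisymm ?_ (sup_le' _ _ h12)⟩))
      exact le_of_stabilizer_mem h le_sup_left (fun x => absurd x h01)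
        (fun _ => mem_sup _ _) (fun x => absurd (c3 h12 x) hc) (fun x => absurd x hc)
    by_cases h02 : swap 0 2 ∈ G
    · refine .inr (.inr (.inr ⟨0, 2, by decide, le_antisymm ?_ (sup_le' _ _ h02)⟩))
      exact le_of_stabilizer_mem h le_sup_left (fun x => absurd x h01)
        (fun x => absurd x h12) (fun _ => mem_sup _ _) (fun x => absurd x hc)
    · exact .inl (le_antisymm (le_of_stabilizer_mem h le_rfl (fun x => absurd x h01)
        (fun x => absurd x h12) (fun x => absurd x h02) (fun x => absurd x hc)) h)
end

section
/- Let S be a semigroup with zero satisfying the identities x*y*z = y*x*z, x*y*z = x*z*y and x*x*y = 0 for all x, y, z ∈ S. Then the product of any finite sequence of at least three elements of S in which some element occurs at least twice equals 0; formally, for every nonempty list l over S with 3 ≤ l.length and ¬ l.Nodup, the left-associated product l.head * (product of l.tail) equals 0. -/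
/-!
The identity `xyz = xzy` says exactly that multiplication is right commutative, so a left-associated
product `a * t₁ * ⋯ * tₙ` does not depend on the order of the `tᵢ` (`List.Perm.foldl_eq`). A repeated
entry can therefore be moved to the front, where the product starts with either `a * a * b` or
`a * x * x`. The first vanishes by hypothesis, and the second equals `x * x * a = 0`; the zero then
absorbs the remaining factors.
-/

theorem foldl_mul_zero {S : Type*} [SemigroupWithZero S] (t : List S) :
    List.foldl (· * ·) (0 : S) t = 0 := by
  induction t with
  | nil => rfl
  | cons b t ih => simpa using ih

/-- In a semigroup with zero satisfying `xyz = yxz`, `xyz = xzy` and `xxy = 0`,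
the product of any list of at least three elements with a repeated entry is `0`. -/
theorem prod_eq_zero_of_repeat {S : Type*} [SemigroupWithZero S]
    (h1 : ∀ x y z : S, x * y * z = y * x * z)
    (h2 : ∀ x y z : S, x * y * z = x * z * y)
    (h3 : ∀ x y : S, x * x * y = 0)
    (l : List S) (hne : l ≠ []) (hlen : 3 ≤ l.length) (hnd : ¬ l.Nodup) :
    List.foldl (· * ·) (l.head hne) l.tail = 0 := by
  have : RightCommutative (fun x y : S => x * y) := ⟨h2⟩
  obtain ⟨a, t, rfl⟩ := List.exists_cons_of_ne_nil hne
  simp only [List.head_cons, List.tail_cons]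
  by_cases ha : a ∈ t
  · obtain ⟨t', ht⟩ : ∃ t', t.Perm (a :: t') := by
      classical exact ⟨_, List.perm_cons_erase ha⟩
    rw [ht.foldl_eq]
    have hl := ht.length_eq
    -- The length bound supplies the third factor needed for `a * a * b = 0`.
    cases t' with
    | nil => simp at hl hlen; omega
    | cons b t'' => simp only [List.foldl_cons, h3, foldl_mul_zero]
  · have ht : ¬ t.Nodup := fun h => hnd (List.nodup_cons.2 ⟨ha, h⟩)
    obtain ⟨x, hx⟩ := List.exists_duplicate_iff_not_nodup.2 ht
    obtain ⟨t', ht'⟩ := (List.duplicate_iff_sublist.1 hx).exists_perm_append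
    rw [ht'.foldl_eq]
    have h0 : a * x * x = 0 := by rw [h1, h2, h3]
    simp only [List.cons_append, List.nil_append, List.foldl_cons, h0, foldl_mul_zero]
end
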